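/- There exists an absolute constant C such that for every n ≥ 2, every f ∈ L^1[0,1) and every λ > 0, the Nörlund logarithmic mean satisfies λ · mes{x ∈ [0,1) : |(f ∗ F_n)(x)| > λ} ≤ C ‖f‖_{L^1[0,1)}; that is, the operators f ↦ f ∗ F_n are uniformly of weak type (1,1). -/

import Mathlib

open MeasureTheory Filter

noncomputable section

/-- The unit cube `[0,1)^d`. -/
def unitCube (d : ℕ) : Set (Fin d → ℝ) := Set.univ.pi fun _ => Set.Ico (0:ℝ) 1

/-- Lebesgue measure restricted to the unit cube `[0,1)^d`. -/
def cubeMeasure (d : ℕ) : Measure (Fin d → ℝ) := volume.restrict (unitCube d)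

/-- The `1`-periodic function equal to `1` on `[0,1/2)` and to `-1` on `[1/2,1)`. -/
def r0 (x : ℝ) : ℝ := if Int.fract x < 1/2 then 1 else -1

/-- The Rademacher functions. -/
def rademacher (n : ℕ) (x : ℝ) : ℝ := r0 (2 ^ n * x)

/-- The Walsh functions (in Paley enumeration, via binary digits). -/
def walsh (n : ℕ) (x : ℝ) : ℝ :=
  ∏ k ∈ Finset.range (n + 1), if n.testBit k then rademacher k x else 1

/-- The Walsh–Dirichlet kernel `D_n`. -/
def dirichletKernel (n : ℕ) (x : ℝ) : ℝ := ∑ k ∈ Finset.range n, walsh k x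

/-- `l_n = ∑_{k=1}^{n-1} 1/k`. -/
def logSum (n : ℕ) : ℝ := ∑ k ∈ Finset.Icc 1 (n - 1), (1 : ℝ) / k

/-- The Nörlund logarithmic kernel `F_n`. -/
def FKernel (n : ℕ) (u : ℝ) : ℝ :=
  (1 / logSum n) * ∑ i ∈ Finset.Ico 1 n, dirichletKernel (n - i) u / i

/-- The Riesz logarithmic kernel `G_n`. -/
def GKernel (n : ℕ) (u : ℝ) : ℝ :=
  (1 / logSum n) * ∑ i ∈ Finset.Ico 1 n, dirichletKernel i u / i

/-- Walsh–Fourier coefficient of `f` on the unit cube. -/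
def walshCoef {d : ℕ} (f : (Fin d → ℝ) → ℝ) (j : Fin d → ℕ) : ℝ :=
  ∫ x, f x * ∏ i, walsh (j i) (x i) ∂(cubeMeasure d)

/-- Rectangular partial sums of the multiple Walsh–Fourier series. -/
def rectPartialSum {d : ℕ} (f : (Fin d → ℝ) → ℝ) (N : Fin d → ℕ) (x : Fin d → ℝ) : ℝ :=
  ∑ j ∈ Fintype.piFinset (fun i => Finset.range (N i)),
    walshCoef f j * ∏ i, walsh (j i) (x i)

/-- The mixed logarithmic means `(L_{n_B} ∘ R_{n_{B'}})(f)`. -/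
def mixedLogMean {d : ℕ} (B : Finset (Fin d)) (f : (Fin d → ℝ) → ℝ)
    (n : Fin d → ℕ) (x : Fin d → ℝ) : ℝ :=
  (∏ j, logSum (n j))⁻¹ *
    ∑ i ∈ Fintype.piFinset (fun j => Finset.Ico 1 (n j)),
      rectPartialSum f (fun j => if j ∈ B then n j - i j else i j) x / ∏ j, (i j : ℝ)

/-- A Young function: convex, continuous, even, vanishing at `0`, with
`Q(u)/u → ∞` at `+∞` and `Q(u)/u → 0` at `0`. -/
structure YoungFunction where
  toFun : ℝ → ℝ
  nonneg : ∀ u, 0 ≤ toFun u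
  convexOn : ConvexOn ℝ Set.univ toFun
  continuous : Continuous toFun
  even : ∀ u, toFun (-u) = toFun u
  map_zero : toFun 0 = 0
  tendsto_atTop : Tendsto (fun u => toFun u / u) atTop atTop
  tendsto_zero : Tendsto (fun u => toFun u / u) (nhdsWithin 0 {(0:ℝ)}ᶜ) (nhds 0)

/-- The set of admissible constants `k` in the Luxemburg norm of `f`. -/
def orliczSet {d : ℕ} (Q : YoungFunction) (f : (Fin d → ℝ) → ℝ) : Set ℝ :=
  {k | 0 < k ∧ Integrable (fun x => Q.toFun (|f x| / k)) (cubeMeasure d) ∧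
    ∫ x, Q.toFun (|f x| / k) ∂(cubeMeasure d) ≤ 1}

/-- `f` belongs to the Orlicz space `L_Q(I^d)`. -/
def MemOrlicz {d : ℕ} (Q : YoungFunction) (f : (Fin d → ℝ) → ℝ) : Prop :=
  Measurable f ∧ (orliczSet Q f).Nonempty

/-- The Luxemburg norm on the Orlicz space `L_Q(I^d)`. -/
def orliczNorm {d : ℕ} (Q : YoungFunction) (f : (Fin d → ℝ) → ℝ) : ℝ :=
  sInf (orliczSet Q f)

/-- `p_n = 2^{2n} + 2^{2n-2} + ⋯ + 2^0`. -/
def pIdx (n : ℕ) : ℕ := ∑ k ∈ Finset.range (n + 1), 4 ^ k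

/-- `m̃ = ⌊ l_{p_{⌊m/2⌋}-1}/16 - 2^15 ⌋`. -/
def mTilde (m : ℕ) : ℤ := ⌊logSum (pIdx (m / 2) - 1) / 16 - 2 ^ 15⌋

/-- `m₀ = min{m : m̃ > 1}`. -/
def m₀ : ℕ := sInf {m : ℕ | 1 < mTilde m}

/-- The set `Ω_n`. -/
def Omega (n : ℕ) : Set ℝ :=
  ⋃ m ∈ Finset.Icc n (2 * n),
    Set.Ico ((2:ℝ) ^ (-(m:ℤ) - 1) + (2:ℝ) ^ (-(m:ℤ) - mTilde m)) ((2:ℝ) ^ (-(m:ℤ)))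

/-- `k`-th binary digit of `x` (the expansion not terminating in `1`'s). -/
def binDigit (k : ℕ) (x : ℝ) : ℕ := (⌊x * 2 ^ (k + 1)⌋).toNat % 2

/-- Dyadic addition on `[0,1)`. -/
def dyadicAdd (x t : ℝ) : ℝ :=
  ∑' k : ℕ, |(binDigit k x : ℝ) - (binDigit k t : ℝ)| / 2 ^ (k + 1)

/-- Dyadic convolution `f ∗ K` on `[0,1)`. -/
def dyadicConv (f K : ℝ → ℝ) (x : ℝ) : ℝ :=
  ∫ t in Set.Ico (0:ℝ) 1, f t * K (dyadicAdd x t)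

/-- Lebesgue measure restricted to `[0,1)`. -/
def unitMeasure : Measure ℝ := volume.restrict (Set.Ico (0:ℝ) 1)

/-- A set `A ⊆ L_Q(I^d)` is nowhere dense w.r.t. the Luxemburg norm. -/
def OrliczNowhereDense {d : ℕ} (Q : YoungFunction) (A : Set ((Fin d → ℝ) → ℝ)) : Prop :=
  ∀ f, MemOrlicz Q f → ∀ ε > 0, ∃ g, MemOrlicz Q g ∧ ∃ δ > 0,
    (∀ h, MemOrlicz Q h → orliczNorm Q (h - g) < δ → orliczNorm Q (h - f) < ε) ∧
    (∀ h, MemOrlicz Q h → orliczNorm Q (h - g) < δ → h ∉ A)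

/-- A set `A ⊆ L_Q(I^d)` is of first Baire category (meager) w.r.t. the Luxemburg norm. -/
def OrliczMeager {d : ℕ} (Q : YoungFunction) (A : Set ((Fin d → ℝ) → ℝ)) : Prop :=
  ∃ F : ℕ → Set ((Fin d → ℝ) → ℝ), (∀ k, OrliczNowhereDense Q (F k)) ∧ A ⊆ ⋃ k, F k

/-!
Write `r_k` for the Rademacher functions and `w_n`, `D_n` for the Walsh functions and their
Dirichlet kernels. Splitting off the leading binary digit of `n` repeatedly, one finds
`l_n F_n = w_n ∑_k a_k (D_{2^{k+1}} - D_{2^k}) + E_n`, where `k` runs over the positions of the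
binary digits `1` of `n` and `a_k = l_{n mod 2^{k+1}} ≤ l_n`. Abel summation and the uniform `L¹`
bound for the Walsh–Fejér kernels give `‖E_n‖₁ ≲ l_n`. Since multiplication of kernel, input and
output by the character `w_n` changes no absolute value, the main term is a martingale transform
of `f` with coefficients bounded by `1` after division by `l_n`; its weak type `(1,1)` bound
follows from Burkholder's zigzag-concave function. As `F_n` depends only on the first `M` binary
digits when `n ≤ 2^M`, everything takes place on the finite dyadic group `(ℤ/2)^M`.
-/

open scoped BigOperators

/-- Burkholder's special function for the weak type `(1,1)` inequality for martingale transforms: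
`x` is the value of the martingale and `y` that of its transform. -/
def burkholder (x y : ℝ) : ℝ := if |x| + |y| ≤ 1 then y ^ 2 - x ^ 2 else 1 - 2 * |x|

lemma burkholder_le (x y : ℝ) : burkholder x y ≤ 1 - 2 * |x| := by
  unfold burkholder
  split_ifs with hxy
  · rw [← sq_abs x, ← sq_abs y]
    nlinarith [abs_nonneg x, abs_nonneg y]
  · exact le_rfl

lemma boole_sub_le_burkholder (x y : ℝ) :
    (if 1 ≤ |y| then (1 : ℝ) else 0) - 2 * |x| ≤ burkholder x y := by
  have hx := abs_nonneg x
  have hy := abs_nonneg y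
  unfold burkholder
  rw [← sq_abs x, ← sq_abs y]
  split_ifs <;> nlinarith

lemma burkholder_zero_right_nonpos (x : ℝ) : burkholder x 0 ≤ 0 := by
  unfold burkholder
  split_ifs with hx
  · nlinarith [sq_nonneg x]
  · rw [abs_zero, add_zero] at hx
    linarith

lemma one_sub_two_mul_le_tangent {x y X Y : ℝ} (hxy : |x| + |y| ≤ 1) (hXY : 1 ≤ X + Y)
    (h : |Y - y| ≤ |X - x|) :
    1 - 2 * X ≤ y ^ 2 - x ^ 2 + 2 * y * (Y - y) - 2 * x * (X - x) := by
  have hx : x ≤ 1 := by linarith [le_abs_self x, abs_nonneg y]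
  have hsum : x + y ≤ 1 := by linarith [le_abs_self x, le_abs_self y]
  have hdiff : 0 ≤ 1 - x + y := by linarith [le_abs_self x, neg_abs_le y]
  rcases le_or_gt (2 * Y) (1 - x + y) with hY | hY
  · nlinarith [mul_nonneg (sub_nonneg.2 hsum) (sub_nonneg.2 hY),
      mul_nonneg (sub_nonneg.2 hXY) (sub_nonneg.2 hx)]
  · rw [abs_of_nonneg (by linarith : 0 ≤ Y - y)] at h
    rcases le_abs.1 h with hX | hX
    · nlinarith [mul_nonneg (sub_nonneg.2 hX) (sub_nonneg.2 hx),
        mul_nonneg (sub_nonneg.2 hY.le) hdiff]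
    · obtain rfl : x = 1 - y := by linarith
      obtain rfl : X = 1 - Y := by linarith
      nlinarith

lemma burkholder_le_tangent {x y X Y : ℝ} (hxy : |x| + |y| ≤ 1) (h : |Y - y| ≤ |X - x|) :
    burkholder X Y ≤ y ^ 2 - x ^ 2 + 2 * y * (Y - y) - 2 * x * (X - x) := by
  have neg_sub_neg_abs (s t : ℝ) : |-s - -t| = |s - t| := by rw [neg_sub_neg, abs_sub_comm]
  wlog hX : 0 ≤ X generalizing x X
  · have := this (x := -x) (X := -X) (by rwa [abs_neg]) (by rwa [neg_sub_neg_abs]) (by linarith)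
    simp only [burkholder, abs_neg, neg_sq] at this ⊢
    linarith
  wlog hY : 0 ≤ Y generalizing y Y
  · have := this (y := -y) (Y := -Y) (by rwa [abs_neg]) (by rwa [neg_sub_neg_abs]) (by linarith)
    simp only [burkholder, abs_neg, neg_sq] at this ⊢
    linarith
  unfold burkholder
  rw [abs_of_nonneg hX, abs_of_nonneg hY]
  split_ifs with hXY
  · linarith [sq_le_sq.2 h]
  · exact one_sub_two_mul_le_tangent hxy (by linarith) h

/-- Zigzag concavity: `burkholder` is midpoint concave along every direction `(h, k)` in which the
transform moves no more than the martingale. -/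
lemma burkholder_add_add_burkholder_sub_le {h k : ℝ} (x y : ℝ) (hk : |k| ≤ |h|) :
    burkholder (x + h) (y + k) + burkholder (x - h) (y - k) ≤ 2 * burkholder x y := by
  by_cases hxy : |x| + |y| ≤ 1
  · have hadd := burkholder_le_tangent (X := x + h) (Y := y + k) hxy (by simpa using hk)
    have hsub := burkholder_le_tangent (X := x - h) (Y := y - k) hxy (by simpa using hk)
    have hmid : burkholder x y = y ^ 2 - x ^ 2 := if_pos hxy
    linarith
  · have hadd := burkholder_le (x + h) (y + k)
    have hsub := burkholder_le (x - h) (y - k)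
    have hmid : burkholder x y = 1 - 2 * |x| := if_neg hxy
    have htri : |2 * x| ≤ |x + h| + |x - h| := by
      simpa [two_mul] using abs_add_le (x + h) (x - h)
    rw [abs_mul, abs_two] at htri
    linarith

section L1

variable {X : Type*} [Fintype X]

/-- The `L¹` seminorm of the uniform probability measure on a finite type. -/
def l1Norm (X : Type*) [Fintype X] : Seminorm ℝ (X → ℝ) :=
  Seminorm.of (fun f => 𝔼 x, |f x|)
    (fun f g => by
      rw [← Finset.expect_add_distrib]
      exact Finset.expect_le_expect fun x _ => abs_add_le (f x) (g x))
    (fun c f => by simp only [Pi.smul_apply, smul_eq_mul, abs_mul, Finset.mul_expect,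
      Real.norm_eq_abs])

lemma l1Norm_apply (f : X → ℝ) : l1Norm X f = 𝔼 x, |f x| := rfl

lemma card_mul_l1Norm (f : X → ℝ) : Fintype.card X * l1Norm X f = ∑ x, |f x| := by
  rw [l1Norm_apply, Fintype.card_mul_expect]

lemma l1Norm_one [Nonempty X] : l1Norm X 1 = 1 := by
  simp [l1Norm_apply]

lemma l1Norm_comp_perm (σ : Equiv.Perm X) (f : X → ℝ) : l1Norm X (f ∘ σ) = l1Norm X f :=
  Fintype.expect_equiv σ _ _ fun _ => rfl

lemma l1Norm_mul_of_abs_eq_one {s : X → ℝ} (hs : ∀ x, |s x| = 1) (f : X → ℝ) :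
    l1Norm X (s * f) = l1Norm X f := by
  simp only [l1Norm_apply, Pi.mul_apply, abs_mul, hs, one_mul]

lemma l1Norm_add_mul_of_comp_eq {σ : Equiv.Perm X} {s f : X → ℝ} (hs : ∀ x, |s x| = 1)
    (hsσ : s ∘ σ = -s) (hfσ : f ∘ σ = f) : l1Norm X (f + s * f) = l1Norm X f := by
  have hcomp : (f + s * f) ∘ σ = f - s * f := by
    ext x
    have hsx := congrFun hsσ x
    have hfx := congrFun hfσ x
    simp only [Function.comp_apply, Pi.neg_apply] at hsx hfx
    simp only [Function.comp_apply, Pi.add_apply, Pi.sub_apply, Pi.mul_apply, hsx, hfx]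
    ring
  have hpoint (x : X) : |(f + s * f) x| + |(f - s * f) x| = 2 * |f x| := by
    rcases eq_or_eq_neg_of_abs_eq (hs x) with hx | hx <;>
      simp [hx, ← two_mul, abs_mul]
  have hsum : l1Norm X (f + s * f) + l1Norm X (f - s * f) = 2 * l1Norm X f := by
    simp only [l1Norm_apply, ← Finset.expect_add_distrib, hpoint, ← Finset.mul_expect]
  rw [← hcomp, l1Norm_comp_perm] at hsum
  linarith

lemma mul_card_le_abs_le (f : X → ℝ) (c : ℝ) :
    c * Finset.card {x | c ≤ |f x|} ≤ Fintype.card X * l1Norm X f := by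
  calc c * Finset.card {x | c ≤ |f x|} = ∑ x with c ≤ |f x|, c := by
        rw [Finset.sum_const, nsmul_eq_mul, mul_comm]
    _ ≤ ∑ x with c ≤ |f x|, |f x| := Finset.sum_le_sum fun x hx => (Finset.mem_filter.1 hx).2
    _ ≤ ∑ x, |f x| := Finset.sum_le_univ_sum_of_nonneg fun x => abs_nonneg (f x)
    _ = Fintype.card X * l1Norm X f := (card_mul_l1Norm f).symm

lemma mul_card_lt_abs_add_le {f g : X → ℝ} {c A B : ℝ} (hc : 0 ≤ c)
    (hf : c / 2 * Finset.card {x | c / 2 ≤ |f x|} ≤ A)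
    (hg : c / 2 * Finset.card {x | c / 2 ≤ |g x|} ≤ B) :
    c * Finset.card {x | c < |(f + g) x|} ≤ 2 * (A + B) := by
  classical
  have hcard : Finset.card {x | c < |(f + g) x|} ≤
      Finset.card {x | c / 2 ≤ |f x|} + Finset.card {x | c / 2 ≤ |g x|} := by
    refine (Finset.card_le_card fun x hx => ?_).trans (Finset.card_union_le _ _)
    simp only [Finset.mem_union, Finset.mem_filter_univ, Pi.add_apply] at hx ⊢
    by_contra! hlt
    linarith [abs_add_le (f x) (g x)]
  have hmul := mul_le_mul_of_nonneg_left (Nat.cast_le (α := ℝ).2 hcard) hc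
  push_cast at hmul
  linarith

end L1

section AbelSummation

variable {E : Type*} [AddCommGroup E] [Module ℝ E]

lemma sum_range_smul_eq_add_sum_sub_smul (c : ℕ → ℝ) (v : ℕ → E) (J : ℕ) :
    ∑ j ∈ Finset.range J, c j • v j = c (J - 1) • ∑ j ∈ Finset.range J, v j +
      ∑ j ∈ Finset.range (J - 1), (c j - c (j + 1)) • ∑ i ∈ Finset.range (j + 1), v i := by
  rw [Finset.sum_range_by_parts, sub_eq_add_neg, ← Finset.sum_neg_distrib]
  simp only [← neg_smul, neg_sub]

lemma seminorm_sum_smul_le_of_antitone (p : Seminorm ℝ E) {c : ℕ → ℝ} (hc : Antitone c)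
    (hc0 : ∀ j, 0 ≤ c j) {v : ℕ → E} {B : ℝ} {J : ℕ}
    (hv : ∀ n ≤ J, p (∑ j ∈ Finset.range n, v j) ≤ B * n) :
    p (∑ j ∈ Finset.range J, c j • v j) ≤ B * ∑ j ∈ Finset.range J, c j := by
  have hsmul {t : ℝ} (ht : 0 ≤ t) {n : ℕ} (hn : n ≤ J) :
      p (t • ∑ j ∈ Finset.range n, v j) ≤ B * (t * n) := by
    rw [map_smul_eq_mul, Real.norm_of_nonneg ht, mul_left_comm]
    exact mul_le_mul_of_nonneg_left (hv n hn) ht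
  have hparts_one := sum_range_smul_eq_add_sum_sub_smul c (fun _ => (1 : ℝ)) J
  simp only [smul_eq_mul, mul_one, Finset.sum_const, Finset.card_range, nsmul_eq_mul] at hparts_one
  rw [sum_range_smul_eq_add_sum_sub_smul, hparts_one, mul_add, Finset.mul_sum]
  refine (map_add_le_add p _ _).trans (add_le_add (hsmul (hc0 _) le_rfl) ?_)
  refine (Finset.le_sum_of_subadditive p (map_zero p).le (map_add_le_add p) _ _).trans
    (Finset.sum_le_sum fun j hj => hsmul (sub_nonneg.2 (hc j.le_succ)) ?_)
  have := Finset.mem_range.1 hj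
  lia

end AbelSummation

section DyadicMartingale

variable {E F : Type*} [AddCommGroup E] [Module ℝ E] [AddCommGroup F] [Module ℝ F]

/-- The transform `∑_{k < N} a_k (f_{k+1} - f_k)` of a sequence `f` by scalars `a`; the values may
be functions (a martingale) or the kernels generating them. -/
def martingaleTransform (a : ℕ → ℝ) (f : ℕ → E) (N : ℕ) : E :=
  ∑ k ∈ Finset.range N, a k • (f (k + 1) - f k)

lemma map_martingaleTransform (L : E →ₗ[ℝ] F) (a : ℕ → ℝ) (f : ℕ → E) (N : ℕ) :
    L (martingaleTransform a f N) = martingaleTransform a (fun k => L (f k)) N := by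
  simp only [martingaleTransform, map_sum, map_smul, map_sub]

lemma martingaleTransform_smul (c : ℝ) (a : ℕ → ℝ) (f : ℕ → E) (N : ℕ) :
    martingaleTransform (c • a) f N = c • martingaleTransform a f N := by
  simp only [martingaleTransform, Pi.smul_apply, smul_assoc, Finset.smul_sum]

lemma martingaleTransform_add (a b : ℕ → ℝ) (f : ℕ → E) (N : ℕ) :
    martingaleTransform (a + b) f N = martingaleTransform a f N + martingaleTransform b f N := by
  simp only [martingaleTransform, Pi.add_apply, add_smul, Finset.sum_add_distrib]

lemma martingaleTransform_single (c : ℝ) (f : ℕ → E) {k N : ℕ} (hk : k < N) :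
    martingaleTransform (Pi.single k c) f N = c • (f (k + 1) - f k) := by
  rw [martingaleTransform, Finset.sum_eq_single_of_mem k (Finset.mem_range.2 hk)
    fun i _ hi => by rw [Pi.single_eq_of_ne hi, zero_smul], Pi.single_eq_same]

variable {X : Type*} {σ : ℕ → Equiv.Perm X} {f : ℕ → X → ℝ} {M : ℕ} {a : ℕ → ℝ}

/-- `f 0, …, f M` is a dyadic martingale, the `N`-th conditional expectation being the average over
the orbits of the flip `σ N` of the `N`-th binary digit. -/
structure IsDyadicMartingale (σ : ℕ → Equiv.Perm X) (f : ℕ → X → ℝ) (M : ℕ) : Prop where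
  comp_eq : ∀ N < M, ∀ k ≤ N, f k ∘ σ N = f k
  add_comp_eq : ∀ N < M, f (N + 1) + f (N + 1) ∘ σ N = (2 : ℝ) • f N

lemma IsDyadicMartingale.map (hf : IsDyadicMartingale σ f M) (L : (X → ℝ) →ₗ[ℝ] (X → ℝ))
    (hL : ∀ N K, L (K ∘ σ N) = L K ∘ σ N) : IsDyadicMartingale σ (fun k => L (f k)) M where
  comp_eq N hN k hk := by rw [← hL, hf.comp_eq N hN k hk]
  add_comp_eq N hN := by rw [← hL, ← map_add, hf.add_comp_eq N hN, map_smul]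

lemma IsDyadicMartingale.martingaleTransform_comp_eq (hf : IsDyadicMartingale σ f M) {N : ℕ}
    (hN : N < M) : martingaleTransform a f N ∘ σ N = martingaleTransform a f N := by
  have hmap := map_martingaleTransform (LinearMap.funLeft ℝ ℝ (σ N)) a f N
  refine hmap.trans (Finset.sum_congr rfl fun k hk => ?_)
  have hk := Finset.mem_range.1 hk
  congr 2
  · exact hf.comp_eq N hN _ hk
  · exact hf.comp_eq N hN _ hk.le

variable [Fintype X]

lemma sum_burkholder_add_le (τ : Equiv.Perm X) {u v d e : X → ℝ} (hu : ∀ x, u (τ x) = u x)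
    (hv : ∀ x, v (τ x) = v x) (hd : ∀ x, d (τ x) = -d x) (he : ∀ x, e (τ x) = -e x)
    (hed : ∀ x, |e x| ≤ |d x|) :
    ∑ x, burkholder (u x + d x) (v x + e x) ≤ ∑ x, burkholder (u x) (v x) := by
  have hflip : ∑ x, burkholder (u x - d x) (v x - e x) =
      ∑ x, burkholder (u x + d x) (v x + e x) := by
    rw [← Equiv.sum_comp τ]
    simp only [hu, hv, hd, he, sub_neg_eq_add]
  have hmid := Finset.sum_le_sum fun x (_ : x ∈ Finset.univ) =>
    burkholder_add_add_burkholder_sub_le (u x) (v x) (hed x)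
  rw [Finset.sum_add_distrib, hflip, ← Finset.mul_sum] at hmid
  linarith

lemma IsDyadicMartingale.sum_burkholder_nonpos (hf : IsDyadicMartingale σ f M)
    (ha : ∀ k, |a k| ≤ 1) {N : ℕ} (hN : N ≤ M) :
    ∑ x, burkholder (f N x) (martingaleTransform a f N x) ≤ 0 := by
  induction N with
  | zero =>
    refine Finset.sum_nonpos fun x _ => ?_
    simpa [martingaleTransform] using burkholder_zero_right_nonpos (f 0 x)
  | succ N ih =>
    have hstep (x : X) : martingaleTransform a f (N + 1) x =
        martingaleTransform a f N x + a N * (f (N + 1) x - f N x) := by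
      simp [martingaleTransform, Finset.sum_range_succ]
    have hdiff (x : X) : f (N + 1) (σ N x) - f N (σ N x) = -(f (N + 1) x - f N x) := by
      have hprev := congrFun (hf.comp_eq N hN N le_rfl) x
      have hnext := congrFun (hf.add_comp_eq N hN) x
      simp only [Function.comp_apply, Pi.add_apply, Pi.smul_apply, smul_eq_mul] at hprev hnext
      linarith
    calc ∑ x, burkholder (f (N + 1) x) (martingaleTransform a f (N + 1) x)
        = ∑ x, burkholder (f N x + (f (N + 1) x - f N x))
            (martingaleTransform a f N x + a N * (f (N + 1) x - f N x)) := by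
          simp only [hstep, add_sub_cancel]
      _ ≤ ∑ x, burkholder (f N x) (martingaleTransform a f N x) :=
          sum_burkholder_add_le (σ N) (congrFun (hf.comp_eq N hN N le_rfl))
            (congrFun (hf.martingaleTransform_comp_eq hN)) hdiff
            (fun x => by rw [hdiff, mul_neg])
            (fun x => by
              rw [abs_mul]
              exact mul_le_of_le_one_left (abs_nonneg _) (ha N))
      _ ≤ 0 := ih (by lia)

lemma IsDyadicMartingale.card_one_le_abs_martingaleTransform_le (hf : IsDyadicMartingale σ f M)
    (ha : ∀ k, |a k| ≤ 1) :
    (Finset.card {x | 1 ≤ |martingaleTransform a f M x|} : ℝ) ≤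
      2 * (Fintype.card X * l1Norm X (f M)) := by
  have hlower := Finset.sum_le_sum fun x (_ : x ∈ Finset.univ) =>
    boole_sub_le_burkholder (f M x) (martingaleTransform a f M x)
  rw [Finset.sum_sub_distrib, ← Finset.mul_sum, Finset.sum_boole, ← card_mul_l1Norm] at hlower
  linarith [hf.sum_burkholder_nonpos ha le_rfl]

lemma IsDyadicMartingale.mul_card_le_abs_martingaleTransform_le (hf : IsDyadicMartingale σ f M)
    (ha : ∀ k, |a k| ≤ 1) {c : ℝ} (hc : 0 < c) :
    c * Finset.card {x | c ≤ |martingaleTransform a f M x|} ≤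
      2 * (Fintype.card X * l1Norm X (f M)) := by
  have hunit := (hf.map (c⁻¹ • LinearMap.id) fun _ _ => rfl).card_one_le_abs_martingaleTransform_le
    ha
  have hscale := map_martingaleTransform (c⁻¹ • LinearMap.id) a f M
  simp only [LinearMap.smul_apply, LinearMap.id_apply] at hscale
  simp only [LinearMap.smul_apply, LinearMap.id_apply, ← hscale, Pi.smul_apply, smul_eq_mul,
    ← div_eq_inv_mul, abs_div, abs_of_pos hc, one_le_div hc,
    map_smul_eq_mul, Real.norm_of_nonneg (inv_pos.2 hc).le] at hunit
  calc c * Finset.card {x | c ≤ |martingaleTransform a f M x|}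
      ≤ c * (2 * (Fintype.card X * (l1Norm X (f M) / c))) := by gcongr
    _ = 2 * (Fintype.card X * l1Norm X (f M)) := by field_simp

end DyadicMartingale

section PaleyWalsh

variable {R S : Type*} [CommRing R] [CommRing S]

/-- The `k`-th product, in the Paley enumeration, of a sequence `ε` in a commutative ring. The Walsh
functions arise when `ε` is the Rademacher sequence, taken in a ring of functions or pointwise. -/
def paleyWalsh (ε : ℕ → R) (k : ℕ) : R :=
  ∏ i ∈ Finset.range (k + 1), if k.testBit i then ε i else 1

lemma paleyWalsh_eq_prod_range (ε : ℕ → R) {k L : ℕ} (hk : k < 2 ^ L) :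
    paleyWalsh ε k = ∏ i ∈ Finset.range L, if k.testBit i then ε i else 1 := by
  refine Finset.prod_congr_of_eq_on_inter (fun i _ hi => ?_) (fun i _ hi => ?_) fun _ _ _ => rfl
  · have hLi : L ≤ i := by simpa using hi
    simp [Nat.testBit_lt_two_pow (hk.trans_le (Nat.pow_le_pow_right two_pos hLi))]
  · have hki : k + 1 ≤ i := by simpa using hi
    simp [Nat.testBit_lt_two_pow (Nat.lt_two_pow_self.trans_le
      (Nat.pow_le_pow_right two_pos (k.le_succ.trans hki)))]

lemma map_paleyWalsh (φ : R →+* S) (ε : ℕ → R) (k : ℕ) :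
    φ (paleyWalsh ε k) = paleyWalsh (φ ∘ ε) k := by
  simp only [paleyWalsh, map_prod, apply_ite φ, map_one, Function.comp_apply]

lemma paleyWalsh_congr {ε δ : ℕ → R} {k N : ℕ} (hk : k < 2 ^ N) (h : ∀ i < N, ε i = δ i) :
    paleyWalsh ε k = paleyWalsh δ k := by
  rw [paleyWalsh_eq_prod_range ε hk, paleyWalsh_eq_prod_range δ hk]
  exact Finset.prod_congr rfl fun i hi => by rw [h i (Finset.mem_range.1 hi)]

lemma paleyWalsh_mul (ε δ : ℕ → R) (k : ℕ) :
    paleyWalsh (ε * δ) k = paleyWalsh ε k * paleyWalsh δ k := by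
  simp only [paleyWalsh, ← Finset.prod_mul_distrib, Pi.mul_apply]
  exact Finset.prod_congr rfl fun i _ => by split_ifs <;> simp

lemma paleyWalsh_two_pow_add (ε : ℕ → R) {N m : ℕ} (hm : m < 2 ^ N) :
    paleyWalsh ε (2 ^ N + m) = ε N * paleyWalsh ε m := by
  have hlt : 2 ^ N + m < 2 ^ (N + 1) := by rw [pow_succ]; lia
  rw [paleyWalsh_eq_prod_range ε hlt, paleyWalsh_eq_prod_range ε hm, Finset.prod_range_succ,
    Nat.testBit_two_pow_add_eq, Nat.testBit_lt_two_pow hm, mul_comm]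
  congr 1
  refine Finset.prod_congr rfl fun i hi => ?_
  rw [Nat.testBit_two_pow_add_gt (Finset.mem_range.1 hi)]

lemma paleyWalsh_compl {ε : ℕ → R} (hε : ∀ i, ε i * ε i = 1) {N j : ℕ} (hj : j < 2 ^ N) :
    paleyWalsh ε (2 ^ N - 1 - j) = paleyWalsh ε (2 ^ N - 1) * paleyWalsh ε j := by
  rw [paleyWalsh_eq_prod_range ε hj, paleyWalsh_eq_prod_range ε (show 2 ^ N - 1 - j < 2 ^ N by lia),
    paleyWalsh_eq_prod_range ε (show 2 ^ N - 1 < 2 ^ N by lia), ← Finset.prod_mul_distrib]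
  refine Finset.prod_congr rfl fun i hi => ?_
  have hiN := Finset.mem_range.1 hi
  rw [show 2 ^ N - 1 - j = 2 ^ N - (j + 1) by lia, Nat.testBit_two_pow_sub_succ hj,
    Nat.testBit_two_pow_sub_one]
  cases j.testBit i <;> simp [hiN, hε]

/-- The Dirichlet kernel of the Walsh–Paley system generated by `ε`. -/
def paleyDirichlet (ε : ℕ → R) (n : ℕ) : R := ∑ k ∈ Finset.range n, paleyWalsh ε k

lemma map_paleyDirichlet (φ : R →+* S) (ε : ℕ → R) (n : ℕ) :
    φ (paleyDirichlet ε n) = paleyDirichlet (φ ∘ ε) n := by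
  simp only [paleyDirichlet, map_sum, map_paleyWalsh]

lemma paleyDirichlet_congr {ε δ : ℕ → R} {n N : ℕ} (hn : n ≤ 2 ^ N) (h : ∀ i < N, ε i = δ i) :
    paleyDirichlet ε n = paleyDirichlet δ n :=
  Finset.sum_congr rfl fun _ hk => paleyWalsh_congr ((Finset.mem_range.1 hk).trans_le hn) h

lemma paleyDirichlet_two_pow_add (ε : ℕ → R) {N m : ℕ} (hm : m ≤ 2 ^ N) :
    paleyDirichlet ε (2 ^ N + m) = paleyDirichlet ε (2 ^ N) + ε N * paleyDirichlet ε m := by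
  rw [paleyDirichlet, Finset.sum_range_add]
  congr 1
  rw [paleyDirichlet, Finset.mul_sum]
  exact Finset.sum_congr rfl fun k hk =>
    paleyWalsh_two_pow_add ε ((Finset.mem_range.1 hk).trans_le hm)

lemma paleyDirichlet_two_pow_succ (ε : ℕ → R) (N : ℕ) :
    paleyDirichlet ε (2 ^ (N + 1)) =
      paleyDirichlet ε (2 ^ N) + ε N * paleyDirichlet ε (2 ^ N) := by
  rw [pow_succ, mul_two, paleyDirichlet_two_pow_add ε le_rfl]

lemma paleyDirichlet_two_pow_sub {ε : ℕ → R} (hε : ∀ i, ε i * ε i = 1) {N j : ℕ}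
    (hj : j ≤ 2 ^ N) :
    paleyDirichlet ε (2 ^ N - j) =
      paleyDirichlet ε (2 ^ N) - paleyWalsh ε (2 ^ N - 1) * paleyDirichlet ε j := by
  have htail : ∑ k ∈ Finset.Ico (2 ^ N - j) (2 ^ N), paleyWalsh ε k =
      paleyWalsh ε (2 ^ N - 1) * paleyDirichlet ε j := by
    rw [Finset.sum_Ico_eq_sum_range, show 2 ^ N - (2 ^ N - j) = j by lia,
      ← Finset.sum_range_reflect, paleyDirichlet, Finset.mul_sum]
    refine Finset.sum_congr rfl fun k hk => ?_
    have hkj := Finset.mem_range.1 hk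
    rw [← paleyWalsh_compl hε (by lia), show 2 ^ N - j + (j - 1 - k) = 2 ^ N - 1 - k by lia]
  rw [eq_sub_iff_add_eq, ← htail]
  exact Finset.sum_range_add_sum_Ico _ (Nat.sub_le _ _)

lemma mul_paleyDirichlet_two_pow {ε : ℕ → R} (hε : ∀ i, ε i * ε i = 1) {i N : ℕ} (hi : i < N) :
    ε i * paleyDirichlet ε (2 ^ N) = paleyDirichlet ε (2 ^ N) := by
  induction N with
  | zero => lia
  | succ N ih =>
    rw [paleyDirichlet_two_pow_succ]
    rcases (Nat.lt_succ_iff.1 hi).eq_or_lt with rfl | hlt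
    · rw [mul_add, ← mul_assoc, hε, one_mul, add_comm]
    · rw [mul_add, mul_left_comm, ih hlt]

lemma paleyWalsh_mul_paleyDirichlet_two_pow {ε : ℕ → R} (hε : ∀ i, ε i * ε i = 1) {m N : ℕ}
    (hm : m < 2 ^ N) :
    paleyWalsh ε m * paleyDirichlet ε (2 ^ N) = paleyDirichlet ε (2 ^ N) := by
  rw [paleyWalsh_eq_prod_range ε hm]
  refine Finset.prod_induction _ (fun a => a * paleyDirichlet ε (2 ^ N) = paleyDirichlet ε (2 ^ N))
    (fun a b ha hb => by rw [mul_assoc, hb, ha]) (one_mul _) fun i hi => ?_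
  split_ifs
  · exact mul_paleyDirichlet_two_pow hε (Finset.mem_range.1 hi)
  · exact one_mul _

/-- The unnormalized Fejér kernel of the Walsh–Paley system generated by `ε`. -/
def paleyFejer (ε : ℕ → R) (n : ℕ) : R := ∑ k ∈ Finset.range n, paleyDirichlet ε (k + 1)

lemma paleyFejer_two_pow_add (ε : ℕ → R) {N m : ℕ} (hm : m ≤ 2 ^ N) :
    paleyFejer ε (2 ^ N + m) =
      paleyFejer ε (2 ^ N) + m • paleyDirichlet ε (2 ^ N) + ε N * paleyFejer ε m := by
  rw [paleyFejer, Finset.sum_range_add, add_assoc]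
  congr 1
  have hsplit (k : ℕ) (hk : k ∈ Finset.range m) : paleyDirichlet ε (2 ^ N + k + 1) =
      paleyDirichlet ε (2 ^ N) + ε N * paleyDirichlet ε (k + 1) :=
    paleyDirichlet_two_pow_add ε ((Nat.succ_le_of_lt (Finset.mem_range.1 hk)).trans hm)
  rw [Finset.sum_congr rfl hsplit, Finset.sum_add_distrib, Finset.sum_const, Finset.card_range,
    ← Finset.mul_sum, paleyFejer]

end PaleyWalsh

section LogSum

lemma logSum_eq_sum_Ico (n : ℕ) : logSum n = ∑ i ∈ Finset.Ico 1 n, 1 / (i : ℝ) := by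
  refine Finset.sum_congr (Finset.ext fun k => ?_) fun _ _ => rfl
  simp only [Finset.mem_Icc, Finset.mem_Ico]
  lia

lemma logSum_mono : Monotone logSum := fun m n hmn => by
  rw [logSum_eq_sum_Ico, logSum_eq_sum_Ico]
  exact Finset.sum_le_sum_of_subset_of_nonneg (Finset.Ico_subset_Ico_right hmn)
    fun i _ _ => by positivity

lemma logSum_nonneg (n : ℕ) : 0 ≤ logSum n :=
  Finset.sum_nonneg fun i _ => by positivity

lemma logSum_pos {n : ℕ} (hn : 2 ≤ n) : 0 < logSum n :=
  lt_of_lt_of_le (by norm_num [logSum]) (logSum_mono hn)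

lemma logSum_add_sum_range (a J : ℕ) :
    logSum (a + 1) + ∑ j ∈ Finset.range J, 1 / ((a + 1 + j : ℕ) : ℝ) = logSum (a + 1 + J) := by
  simp only [logSum_eq_sum_Ico]
  rw [← Finset.sum_Ico_consecutive _ (Nat.le_add_left 1 a) (Nat.le_add_right (a + 1) J),
    Finset.sum_Ico_eq_sum_range _ (a + 1), Nat.add_sub_cancel_left]

end LogSum

section Norlund

variable {R S : Type*} [CommRing R] [Algebra ℝ R] [CommRing S] [Algebra ℝ S]

/-- The unnormalized Nörlund logarithmic kernel of the Walsh–Paley system generated by `ε`. -/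
def paleyNorlund (ε : ℕ → R) (n : ℕ) : R :=
  ∑ i ∈ Finset.Ico 1 n, (1 / (i : ℝ)) • paleyDirichlet ε (n - i)

lemma map_paleyNorlund (φ : R →ₐ[ℝ] S) (ε : ℕ → R) (n : ℕ) :
    φ (paleyNorlund ε n) = paleyNorlund (φ ∘ ε) n := by
  simp only [paleyNorlund, map_sum, map_smul]
  exact Finset.sum_congr rfl fun i _ => by
    rw [show φ (paleyDirichlet ε (n - i)) = _ from map_paleyDirichlet (φ : R →+* S) ε (n - i)]
    rfl

lemma paleyNorlund_congr {ε δ : ℕ → R} {n N : ℕ} (hn : n ≤ 2 ^ N) (h : ∀ i < N, ε i = δ i) :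
    paleyNorlund ε n = paleyNorlund δ n :=
  Finset.sum_congr rfl fun i _ => by rw [paleyDirichlet_congr ((Nat.sub_le n i).trans hn) h]

lemma paleyNorlund_eq_sum_Ico_succ (ε : ℕ → R) (n : ℕ) :
    paleyNorlund ε n = ∑ i ∈ Finset.Ico 1 (n + 1), (1 / (i : ℝ)) • paleyDirichlet ε (n - i) := by
  rcases n.eq_zero_or_pos with rfl | hn
  · simp [paleyNorlund]
  · rw [Finset.sum_Ico_succ_top hn, Nat.sub_self, paleyNorlund, paleyDirichlet,
      Finset.sum_range_zero, smul_zero, add_zero]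

lemma paleyNorlund_two_pow_add {ε : ℕ → R} (hε : ∀ i, ε i * ε i = 1) {N m : ℕ} (hm : m < 2 ^ N) :
    paleyNorlund ε (2 ^ N + m) =
      logSum (2 ^ N + m) • paleyDirichlet ε (2 ^ N) + ε N * paleyNorlund ε m -
        paleyWalsh ε (2 ^ N - 1) * ∑ j ∈ Finset.range (2 ^ N - 1),
          (1 / ((m + 1 + j : ℕ) : ℝ)) • paleyDirichlet ε (j + 1) := by
  have hhead : ∑ i ∈ Finset.Ico 1 (m + 1), (1 / (i : ℝ)) • paleyDirichlet ε (2 ^ N + m - i) =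
      logSum (m + 1) • paleyDirichlet ε (2 ^ N) + ε N * paleyNorlund ε m := by
    rw [logSum_eq_sum_Ico, paleyNorlund_eq_sum_Ico_succ, Finset.sum_smul, Finset.mul_sum,
      ← Finset.sum_add_distrib]
    refine Finset.sum_congr rfl fun i hi => ?_
    have him := Finset.mem_Ico.1 hi
    rw [mul_smul_comm, ← smul_add, ← paleyDirichlet_two_pow_add ε (by lia),
      Nat.add_sub_assoc (by lia)]
  have htail : ∑ j ∈ Finset.range (2 ^ N - 1),
      (1 / ((m + 1 + j : ℕ) : ℝ)) • paleyDirichlet ε (2 ^ N + m - (m + 1 + j)) =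
        (∑ j ∈ Finset.range (2 ^ N - 1), 1 / ((m + 1 + j : ℕ) : ℝ)) • paleyDirichlet ε (2 ^ N) -
          paleyWalsh ε (2 ^ N - 1) * ∑ j ∈ Finset.range (2 ^ N - 1),
            (1 / ((m + 1 + j : ℕ) : ℝ)) • paleyDirichlet ε (j + 1) := by
    rw [Finset.sum_smul, Finset.mul_sum, ← Finset.sum_sub_distrib]
    refine Finset.sum_congr rfl fun j hj => ?_
    have hjN := Finset.mem_range.1 hj
    rw [mul_smul_comm, ← smul_sub, ← paleyDirichlet_two_pow_sub hε (by lia),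
      show 2 ^ N + m - (m + 1 + j) = 2 ^ N - (j + 1) by lia]
  have hlog : logSum (2 ^ N + m) =
      logSum (m + 1) + ∑ j ∈ Finset.range (2 ^ N - 1), 1 / ((m + 1 + j : ℕ) : ℝ) := by
    rw [logSum_add_sum_range, show m + 1 + (2 ^ N - 1) = 2 ^ N + m by lia]
  rw [paleyNorlund, ← Finset.sum_Ico_consecutive _ (Nat.le_add_left 1 m)
      (show m + 1 ≤ 2 ^ N + m by lia), Finset.sum_Ico_eq_sum_range _ (m + 1),
    show 2 ^ N + m - (m + 1) = 2 ^ N - 1 by lia, hhead, htail, hlog, add_smul]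
  abel

lemma paleyNorlund_two_pow_add_sub {ε : ℕ → R} (hε : ∀ i, ε i * ε i = 1) {N m : ℕ}
    (hm : m < 2 ^ N) (T : R) :
    paleyNorlund ε (2 ^ N + m) - paleyWalsh ε (2 ^ N + m) *
        (T + logSum (2 ^ N + m) • (paleyDirichlet ε (2 ^ (N + 1)) - paleyDirichlet ε (2 ^ N))) =
      ε N * (paleyNorlund ε m - paleyWalsh ε m * T) -
        paleyWalsh ε (2 ^ N - 1) * ∑ j ∈ Finset.range (2 ^ N - 1),
          (1 / ((m + 1 + j : ℕ) : ℝ)) • paleyDirichlet ε (j + 1) := by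
  have habsorb : ε N * paleyWalsh ε m * (ε N * paleyDirichlet ε (2 ^ N)) =
      paleyDirichlet ε (2 ^ N) := by
    rw [mul_mul_mul_comm, hε, one_mul, paleyWalsh_mul_paleyDirichlet_two_pow hε hm]
  rw [paleyNorlund_two_pow_add hε hm, paleyWalsh_two_pow_add ε hm, paleyDirichlet_two_pow_succ,
    add_sub_cancel_left, mul_add, mul_smul_comm, habsorb]
  ring

@[elab_as_elim]
lemma two_pow_add_induction {p : ℕ → Prop} (zero : p 0)
    (add : ∀ N m, m < 2 ^ N → p m → p (2 ^ N + m)) (n : ℕ) : p n := by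
  induction n using Nat.strong_induction_on with
  | _ n ih =>
    rcases eq_or_ne n 0 with rfl | hn
    · exact zero
    · have hle := Nat.pow_log_le_self 2 hn
      have hlt := Nat.lt_pow_succ_log_self one_lt_two n
      rw [pow_succ] at hlt
      have hpos : 0 < 2 ^ Nat.log 2 n := by positivity
      rw [← Nat.add_sub_cancel' hle]
      exact add _ _ (by lia) (ih _ (by lia))

end Norlund

section Correlation

variable {G : Type*} [AddCommGroup G] [Fintype G]

/-- The operator `K ↦ (x ↦ ∑ b, h b * K (x + b))`. On a group of exponent two, where `x + b` is
`x - b`, it is the convolution with `h`. -/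
def correlation (h : G → ℝ) : (G → ℝ) →ₗ[ℝ] (G → ℝ) :=
  ∑ b, h b • LinearMap.funLeft ℝ ℝ (· + b)

lemma correlation_apply (h K : G → ℝ) (x : G) : correlation h K x = ∑ b, h b * K (x + b) := by
  simp [correlation, LinearMap.funLeft_apply]

lemma correlation_comp_addRight (h K : G → ℝ) (e : G) :
    correlation h (K ∘ Equiv.addRight e) = correlation h K ∘ Equiv.addRight e := by
  ext x
  simp only [Function.comp_apply, correlation_apply, Equiv.coe_addRight, add_right_comm]

lemma correlation_mul_of_map_add {χ : G → ℝ} (hχ : ∀ x b, χ (x + b) = χ x * χ b) (h K : G → ℝ) :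
    correlation h (χ * K) = χ * correlation (h * χ) K := by
  ext x
  simp only [Pi.mul_apply, correlation_apply, hχ, Finset.mul_sum]
  exact Finset.sum_congr rfl fun b _ => by ring

lemma l1Norm_correlation_le (h K : G → ℝ) :
    l1Norm G (correlation h K) ≤ (∑ b, |h b|) * l1Norm G K := by
  rw [correlation, LinearMap.sum_apply, Finset.sum_mul]
  refine (Finset.le_sum_of_subadditive (l1Norm G) (map_zero _).le (map_add_le_add _) _ _).trans
    (Finset.sum_le_sum fun b _ => le_of_eq ?_)
  rw [LinearMap.smul_apply, map_smul_eq_mul, Real.norm_eq_abs]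
  exact congrArg (|h b| * ·) (l1Norm_comp_perm (Equiv.addRight b) K)

lemma mul_card_le_abs_correlation_le (h K : G → ℝ) (c : ℝ) :
    c * Finset.card {x | c ≤ |correlation h K x|} ≤
      Fintype.card G * ((∑ b, |h b|) * l1Norm G K) :=
  (mul_card_le_abs_le _ c).trans (by gcongr; exact l1Norm_correlation_le h K)

end Correlation

section DyadicGroup

/-- The group of the first `M` binary digits, under digitwise addition modulo `2`. -/
abbrev DyadicGroup (M : ℕ) : Type := Fin M → Fin 2

/-- The `i`-th Rademacher function on `DyadicGroup M`; it is the constant `1` when `M ≤ i`. -/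
def coordSign (M i : ℕ) (g : DyadicGroup M) : ℝ :=
  if h : i < M then (-1) ^ (g ⟨i, h⟩ : ℕ) else 1

/-- Addition of the `N`-th unit vector, changing the `N`-th digit. -/
def coordFlip (M N : ℕ) : Equiv.Perm (DyadicGroup M) :=
  Equiv.addRight fun j => if (j : ℕ) = N then 1 else 0

variable {M N n : ℕ}

lemma neg_one_pow_val_add (a b : Fin 2) :
    (-1 : ℝ) ^ ((a + b : Fin 2) : ℕ) = (-1) ^ (a : ℕ) * (-1) ^ (b : ℕ) := by
  fin_cases a <;> fin_cases b <;> simp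

lemma coordSign_add (i : ℕ) (g h : DyadicGroup M) :
    coordSign M i (g + h) = coordSign M i g * coordSign M i h := by
  unfold coordSign
  split_ifs
  · exact neg_one_pow_val_add _ _
  · exact (one_mul 1).symm

lemma abs_coordSign (i : ℕ) (g : DyadicGroup M) : |coordSign M i g| = 1 := by
  unfold coordSign
  split_ifs <;> simp

lemma coordSign_mul_self (M i : ℕ) : coordSign M i * coordSign M i = 1 := by
  ext g
  rw [Pi.mul_apply, ← abs_mul_abs_self, abs_coordSign, one_mul, Pi.one_apply]

lemma coordSign_comp_coordFlip_self (hN : N < M) :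
    coordSign M N ∘ coordFlip M N = -coordSign M N := by
  ext g
  rw [Function.comp_apply, coordFlip, Equiv.coe_addRight, coordSign_add]
  simp [coordSign, hN]

lemma coordSign_comp_coordFlip_of_ne {i : ℕ} (hi : i ≠ N) :
    coordSign M i ∘ coordFlip M N = coordSign M i := by
  ext g
  rw [Function.comp_apply, coordFlip, Equiv.coe_addRight, coordSign_add]
  simp [coordSign, hi]

lemma abs_paleyWalsh_coordSign (k : ℕ) (g : DyadicGroup M) :
    |paleyWalsh (coordSign M) k g| = 1 := by
  rw [paleyWalsh, Finset.prod_apply, Finset.abs_prod]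
  refine Finset.prod_eq_one fun i _ => ?_
  split_ifs
  · exact abs_coordSign i g
  · exact abs_one

lemma paleyWalsh_coordSign_add (k : ℕ) (g h : DyadicGroup M) :
    paleyWalsh (coordSign M) k (g + h) =
      paleyWalsh (coordSign M) k g * paleyWalsh (coordSign M) k h := by
  have heval (g : DyadicGroup M) : paleyWalsh (coordSign M) k g =
      paleyWalsh (fun i => coordSign M i g) k :=
    map_paleyWalsh (Pi.evalRingHom (fun _ => ℝ) g) (coordSign M) k
  rw [heval, heval, heval, ← paleyWalsh_mul]
  exact congrArg (paleyWalsh · k) (funext fun i => coordSign_add i g h)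

lemma paleyDirichlet_coordSign_comp_coordFlip (hn : n ≤ 2 ^ N) :
    paleyDirichlet (coordSign M) n ∘ coordFlip M N = paleyDirichlet (coordSign M) n := by
  have heval (g : DyadicGroup M) : paleyDirichlet (coordSign M) n g =
      paleyDirichlet (fun i => coordSign M i g) n :=
    map_paleyDirichlet (Pi.evalRingHom (fun _ => ℝ) g) (coordSign M) n
  ext g
  rw [Function.comp_apply, heval, heval]
  exact paleyDirichlet_congr hn fun i hi =>
    congrFun (coordSign_comp_coordFlip_of_ne hi.ne) g

lemma paleyFejer_coordSign_comp_coordFlip (hn : n ≤ 2 ^ N) :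
    paleyFejer (coordSign M) n ∘ coordFlip M N = paleyFejer (coordSign M) n := by
  ext g
  simp only [Function.comp_apply, paleyFejer, Finset.sum_apply]
  exact Finset.sum_congr rfl fun k hk => congrFun (paleyDirichlet_coordSign_comp_coordFlip
    ((Nat.succ_le_of_lt (Finset.mem_range.1 hk)).trans hn)) g

lemma isDyadicMartingale_paleyDirichlet (M : ℕ) :
    IsDyadicMartingale (coordFlip M) (fun k => paleyDirichlet (coordSign M) (2 ^ k)) M where
  comp_eq N _ k hk :=
    paleyDirichlet_coordSign_comp_coordFlip (Nat.pow_le_pow_right two_pos hk)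
  add_comp_eq N hN := by
    have hsign := coordSign_comp_coordFlip_self hN
    have hinv := paleyDirichlet_coordSign_comp_coordFlip (M := M) (le_refl (2 ^ N))
    ext g
    have hsign_g := congrFun hsign g
    have hinv_g := congrFun hinv g
    simp only [Function.comp_apply, Pi.neg_apply] at hsign_g hinv_g
    simp only [paleyDirichlet_two_pow_succ, Pi.add_apply, Pi.mul_apply, Function.comp_apply,
      hsign_g, hinv_g, Pi.smul_apply, smul_eq_mul]
    ring

lemma l1Norm_paleyDirichlet_two_pow (hN : N ≤ M) :
    l1Norm (DyadicGroup M) (paleyDirichlet (coordSign M) (2 ^ N)) = 1 := by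
  induction N with
  | zero => simpa [paleyDirichlet, paleyWalsh] using l1Norm_one (X := DyadicGroup M)
  | succ N ih =>
    rw [paleyDirichlet_two_pow_succ, l1Norm_add_mul_of_comp_eq (abs_coordSign N)
      (coordSign_comp_coordFlip_self hN) (paleyDirichlet_coordSign_comp_coordFlip le_rfl)]
    exact ih (Nat.le_of_succ_le hN)

lemma l1Norm_nsmul_paleyDirichlet_two_pow (hN : N ≤ M) (m : ℕ) :
    l1Norm (DyadicGroup M) (m • paleyDirichlet (coordSign M) (2 ^ N)) = m := by
  rw [← Nat.cast_smul_eq_nsmul ℝ, map_smul_eq_mul, l1Norm_paleyDirichlet_two_pow hN, mul_one,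
    Real.norm_natCast]

lemma l1Norm_paleyFejer_two_pow_le (hN : N ≤ M) :
    l1Norm (DyadicGroup M) (paleyFejer (coordSign M) (2 ^ N)) ≤ 2 ^ N := by
  induction N with
  | zero => simpa [paleyFejer] using (l1Norm_paleyDirichlet_two_pow M.zero_le).le
  | succ N ih =>
    have hN' := Nat.le_of_succ_le hN
    rw [pow_succ, mul_two, paleyFejer_two_pow_add _ le_rfl, add_right_comm]
    refine (map_add_le_add _ _ _).trans ?_
    rw [l1Norm_add_mul_of_comp_eq (abs_coordSign N) (coordSign_comp_coordFlip_self hN)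
        (paleyFejer_coordSign_comp_coordFlip le_rfl), l1Norm_nsmul_paleyDirichlet_two_pow hN',
      pow_succ, mul_two]
    exact add_le_add (ih hN') (by simp)

lemma l1Norm_paleyFejer_le (hn : n < 2 ^ M) :
    l1Norm (DyadicGroup M) (paleyFejer (coordSign M) n) ≤ 2 * n := by
  induction n using two_pow_add_induction with
  | zero => simp [paleyFejer]
  | add N m hm ih =>
    have hNM : N ≤ M := ((Nat.pow_lt_pow_iff_right one_lt_two).1 (by lia)).le
    have hmN : (m : ℝ) ≤ 2 ^ N := by exact_mod_cast hm.le
    rw [paleyFejer_two_pow_add _ hm.le]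
    refine (map_add_le_add _ _ _).trans
      ((add_le_add_left (map_add_le_add _ _ _) _).trans ?_)
    rw [l1Norm_mul_of_abs_eq_one (abs_coordSign N), l1Norm_nsmul_paleyDirichlet_two_pow hNM]
    push_cast
    linarith [ih (by lia), l1Norm_paleyFejer_two_pow_le hNM]

/-- The coefficients of the martingale transform that carries the singular part of the `n`-th
Nörlund logarithmic kernel: `l_{n mod 2^{k+1}}` at each binary digit `k` of `n` equal to `1`. -/
def norlundCoeff (n k : ℕ) : ℝ := if n.testBit k then logSum (n % 2 ^ (k + 1)) else 0

lemma abs_norlundCoeff_le (n k : ℕ) : |norlundCoeff n k| ≤ logSum n := by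
  unfold norlundCoeff
  split_ifs
  · rw [abs_of_nonneg (logSum_nonneg _)]
    exact logSum_mono (Nat.mod_le _ _)
  · rw [abs_zero]
    exact logSum_nonneg n

lemma norlundCoeff_two_pow_add {m : ℕ} (hm : m < 2 ^ N) :
    norlundCoeff (2 ^ N + m) = norlundCoeff m + Pi.single N (logSum (2 ^ N + m)) := by
  ext k
  rw [Pi.add_apply]
  rcases lt_trichotomy k N with hk | rfl | hk
  · have hmod : (2 ^ N + m) % 2 ^ (k + 1) = m % 2 ^ (k + 1) := by
      obtain ⟨c, hc⟩ := pow_dvd_pow 2 (Nat.succ_le_of_lt hk)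
      rw [hc, Nat.mul_add_mod]
    rw [norlundCoeff, Nat.testBit_two_pow_add_gt hk, hmod, ← norlundCoeff,
      Pi.single_eq_of_ne hk.ne, add_zero]
  · have hlt : 2 ^ k + m < 2 ^ (k + 1) := by rw [pow_succ]; lia
    simp [norlundCoeff, Nat.testBit_two_pow_add_eq, Nat.testBit_lt_two_pow hm, Nat.mod_eq_of_lt hlt]
  · have hlt : 2 ^ N + m < 2 ^ k :=
      lt_of_lt_of_le (by rw [pow_succ]; lia) (Nat.pow_le_pow_right two_pos (Nat.succ_le_of_lt hk))
    simp [norlundCoeff, Nat.testBit_lt_two_pow hlt,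
      Nat.testBit_lt_two_pow ((Nat.le_add_left m _).trans_lt hlt), hk.ne']

lemma l1Norm_sum_one_div_smul_paleyDirichlet_le (hN : N ≤ M) (m : ℕ) :
    l1Norm (DyadicGroup M) (∑ j ∈ Finset.range (2 ^ N - 1),
        (1 / ((m + 1 + j : ℕ) : ℝ)) • paleyDirichlet (coordSign M) (j + 1)) ≤
      2 * (logSum (2 ^ N + m) - logSum (m + 1)) := by
  have hNM : 2 ^ N ≤ 2 ^ M := Nat.pow_le_pow_right two_pos hN
  have hpos : 0 < 2 ^ N := by positivity
  have hanti : Antitone fun j : ℕ => 1 / ((m + 1 + j : ℕ) : ℝ) := fun i j hij =>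
    one_div_le_one_div_of_le (by positivity) (by gcongr)
  have habel := seminorm_sum_smul_le_of_antitone (l1Norm (DyadicGroup M)) hanti
    (fun j => by positivity) (J := 2 ^ N - 1)
    fun n hn => l1Norm_paleyFejer_le (n := n) (M := M) (by lia)
  rwa [eq_sub_of_add_eq' (logSum_add_sum_range m _),
    show m + 1 + (2 ^ N - 1) = 2 ^ N + m by lia] at habel

lemma l1Norm_paleyNorlund_sub_le (hn : n < 2 ^ M) :
    l1Norm (DyadicGroup M) (paleyNorlund (coordSign M) n - paleyWalsh (coordSign M) n *
        martingaleTransform (norlundCoeff n) (fun k => paleyDirichlet (coordSign M) (2 ^ k)) M) ≤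
      2 * logSum n := by
  induction n using two_pow_add_induction with
  | zero => simp [paleyNorlund, martingaleTransform, norlundCoeff, logSum]
  | add N m hm ih =>
    have hNM : N < M := (Nat.pow_lt_pow_iff_right one_lt_two).1 (by lia)
    rw [norlundCoeff_two_pow_add hm, martingaleTransform_add, martingaleTransform_single _ _ hNM,
      paleyNorlund_two_pow_add_sub (coordSign_mul_self M) hm]
    refine (map_sub_le_add _ _ _).trans ?_
    rw [l1Norm_mul_of_abs_eq_one (abs_coordSign N),
      l1Norm_mul_of_abs_eq_one (abs_paleyWalsh_coordSign _)]
    linarith [ih (by lia), l1Norm_sum_one_div_smul_paleyDirichlet_le hNM.le m,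
      logSum_mono m.le_succ]

lemma exists_l1Norm_paleyNorlund_sub_le_two (hn : 2 ≤ n) (hnM : n < 2 ^ M) :
    ∃ a : ℕ → ℝ, (∀ k, |a k| ≤ 1) ∧ l1Norm (DyadicGroup M)
      ((1 / logSum n) • paleyNorlund (coordSign M) n - paleyWalsh (coordSign M) n *
        martingaleTransform a (fun k => paleyDirichlet (coordSign M) (2 ^ k)) M) ≤ 2 := by
  have hlog := logSum_pos hn
  refine ⟨(1 / logSum n) • norlundCoeff n, fun k => ?_, ?_⟩
  · rw [Pi.smul_apply, smul_eq_mul, abs_mul, abs_of_pos (one_div_pos.2 hlog), one_div_mul_eq_div]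
    exact div_le_one_of_le₀ (abs_norlundCoeff_le n k) hlog.le
  · rw [martingaleTransform_smul, mul_smul_comm, ← smul_sub, map_smul_eq_mul,
      Real.norm_of_nonneg (one_div_pos.2 hlog).le, one_div_mul_eq_div, div_le_iff₀ hlog]
    exact l1Norm_paleyNorlund_sub_le hnM

lemma card_dyadicGroup (M : ℕ) : Fintype.card (DyadicGroup M) = 2 ^ M := by
  rw [Fintype.card_fun, Fintype.card_fin, Fintype.card_fin]

lemma mul_card_le_abs_correlation_martingaleTransform_le {a : ℕ → ℝ} (ha : ∀ k, |a k| ≤ 1)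
    (h : DyadicGroup M → ℝ) {c : ℝ} (hc : 0 < c) :
    c * Finset.card {x | c ≤ |correlation h
        (martingaleTransform a (fun k => paleyDirichlet (coordSign M) (2 ^ k)) M) x|} ≤
      2 * (2 ^ M * ∑ b, |h b|) := by
  have hmart := (isDyadicMartingale_paleyDirichlet M).map (correlation h)
    fun N K => correlation_comp_addRight h K _
  have hnorm := l1Norm_correlation_le h (paleyDirichlet (coordSign M) (2 ^ M))
  rw [l1Norm_paleyDirichlet_two_pow le_rfl, mul_one] at hnorm
  have hweak := hmart.mul_card_le_abs_martingaleTransform_le ha hc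
  rw [← map_martingaleTransform, card_dyadicGroup, Nat.cast_pow, Nat.cast_ofNat] at hweak
  exact hweak.trans (by gcongr)

lemma mul_card_lt_abs_correlation_paleyNorlund_le (hn : 2 ≤ n) (hnM : n < 2 ^ M)
    (h : DyadicGroup M → ℝ) {c : ℝ} (hc : 0 < c) :
    c * Finset.card {x | c < |correlation h ((1 / logSum n) • paleyNorlund (coordSign M) n) x|} ≤
      8 * (2 ^ M * ∑ b, |h b|) := by
  obtain ⟨a, ha, hregular_norm⟩ := exists_l1Norm_paleyNorlund_sub_le_two hn hnM
  set w := paleyWalsh (coordSign M) n with hw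
  set T := martingaleTransform a (fun k => paleyDirichlet (coordSign M) (2 ^ k)) M
  set E := (1 / logSum n) • paleyNorlund (coordSign M) n - w * T with hE
  have hsplit : correlation h ((1 / logSum n) • paleyNorlund (coordSign M) n) =
      w * correlation (h * w) T + correlation h E := by
    rw [← correlation_mul_of_map_add (paleyWalsh_coordSign_add n), ← map_add, hE, add_sub_cancel]
  have hsingular : c / 2 * Finset.card {x | c / 2 ≤ |(w * correlation (h * w) T) x|} ≤
      2 * (2 ^ M * ∑ b, |h b|) := by
    simpa [hw, abs_mul, abs_paleyWalsh_coordSign] using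
      mul_card_le_abs_correlation_martingaleTransform_le ha (h * w) (half_pos hc)
  have hregular : c / 2 * Finset.card {x | c / 2 ≤ |correlation h E x|} ≤
      2 ^ M * ((∑ b, |h b|) * 2) := by
    refine (mul_card_le_abs_correlation_le h E (c / 2)).trans ?_
    rw [card_dyadicGroup, Nat.cast_pow, Nat.cast_ofNat]
    gcongr
  rw [hsplit]
  linarith [mul_card_lt_abs_add_le hc.le hsingular hregular]

end DyadicGroup

section BinaryExpansion

lemma ofDigits_lt_one {b : ℕ} {d : ℕ → Fin b} {j : ℕ} (hj : (d j : ℕ) + 1 < b) :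
    Real.ofDigits d < 1 := by
  rw [← Real.ofDigits_const_last_eq_one' (Nat.lt_of_add_left_lt hj)]
  refine Summable.tsum_lt_tsum (i := j) (fun k => ?_) ?_ Real.summable_ofDigitsTerm
    Real.summable_ofDigitsTerm
  · have hk : (d k : ℕ) ≤ b - 1 := Nat.le_sub_one_of_lt (d k).isLt
    simp only [Real.ofDigitsTerm]
    gcongr
  · have hjb : (d j : ℕ) < b - 1 := by lia
    have hb : 0 < b := by lia
    simp only [Real.ofDigitsTerm]
    gcongr

lemma exists_natCast_eq_pow_mul_sum_ofDigitsTerm {b : ℕ} [NeZero b] (d : ℕ → Fin b) (k : ℕ) :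
    ∃ m : ℕ, (b : ℝ) ^ k * ∑ i ∈ Finset.range k, Real.ofDigitsTerm d i = m := by
  induction k with
  | zero => exact ⟨0, by simp⟩
  | succ k ih =>
    obtain ⟨m, hm⟩ := ih
    have hb : (b : ℝ) ≠ 0 := NeZero.ne _
    refine ⟨b * m + d k, ?_⟩
    push_cast
    rw [← hm, Finset.sum_range_succ, Real.ofDigitsTerm]
    field_simp
    ring

lemma digits_ofDigits {b : ℕ} [NeZero b] {d : ℕ → Fin b} (hd : ∃ᶠ j in atTop, (d j : ℕ) + 1 < b) :
    Real.digits (Real.ofDigits d) b = d := by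
  ext k
  obtain ⟨m, hm⟩ := exists_natCast_eq_pow_mul_sum_ofDigitsTerm d k
  set r := Real.ofDigits fun i => d (i + (k + 1))
  have hr0 : 0 ≤ r := Real.ofDigits_nonneg _
  have hr1 : r < 1 := by
    obtain ⟨j, hj, hdj⟩ := frequently_atTop.1 hd (k + 1)
    exact ofDigits_lt_one (j := j - (k + 1)) (by rwa [Nat.sub_add_cancel hj])
  have hshift : Real.ofDigits d * (b : ℝ) ^ (k + 1) = r + (b * m + d k : ℕ) := by
    have hb : (b : ℝ) ≠ 0 := NeZero.ne _
    rw [Real.ofDigits_eq_sum_add_ofDigits d (k + 1), Finset.sum_range_succ, Real.ofDigitsTerm]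
    push_cast
    rw [← hm]
    field_simp
    ring
  rw [Real.digits, hshift, Nat.floor_add_natCast hr0, Nat.floor_eq_zero.2 hr1, zero_add,
    Fin.val_ofNat, Nat.mul_add_mod, Nat.mod_eq_of_lt (d k).isLt]

lemma val_digits_two (k : ℕ) (x : ℝ) : (Real.digits x 2 k : ℕ) = binDigit k x := by
  rw [Real.digits, binDigit, Int.floor_toNat, Fin.val_ofNat, Nat.cast_ofNat]

lemma abs_val_sub_val_fin_two (a b : Fin 2) :
    |((a : ℕ) : ℝ) - ((b : ℕ) : ℝ)| = ((a + b : Fin 2) : ℕ) := by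
  fin_cases a <;> fin_cases b <;> simp

lemma dyadicAdd_eq_ofDigits (x t : ℝ) :
    dyadicAdd x t = Real.ofDigits (Real.digits x 2 + Real.digits t 2) :=
  tsum_congr fun k => by
    rw [Real.ofDigitsTerm, Pi.add_apply, ← abs_val_sub_val_fin_two, val_digits_two, val_digits_two,
      div_eq_mul_inv, Nat.cast_ofNat]

lemma r0_eq_neg_one_pow_floor {y : ℝ} (hy : 0 ≤ y) : r0 y = (-1) ^ ⌊y * 2⌋₊ := by
  have hfract : Int.fract y = y - ⌊y⌋₊ := by
    rw [Int.fract, ← natCast_floor_eq_intCast_floor hy]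
  have hlt := Nat.lt_floor_add_one y
  have hle := Nat.floor_le hy
  unfold r0
  split_ifs with h
  · have hfloor : ⌊y * 2⌋₊ = 2 * ⌊y⌋₊ := by
      rw [Nat.floor_eq_iff (by positivity)]
      push_cast
      constructor <;> linarith
    rw [hfloor, pow_mul, neg_one_sq, one_pow]
  · have hfloor : ⌊y * 2⌋₊ = 2 * ⌊y⌋₊ + 1 := by
      rw [Nat.floor_eq_iff (by positivity)]
      push_cast
      constructor <;> linarith
    rw [hfloor, pow_succ, pow_mul, neg_one_sq, one_pow, one_mul]

lemma rademacher_eq_neg_one_pow_digits (k : ℕ) {x : ℝ} (hx : 0 ≤ x) :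
    rademacher k x = (-1) ^ (Real.digits x 2 k : ℕ) := by
  rw [rademacher, r0_eq_neg_one_pow_floor (by positivity), Real.digits, Fin.val_ofNat,
    ← neg_one_pow_eq_pow_mod_two]
  congr 2
  push_cast
  ring

/-- The first `M` binary digits of a real number, as an element of the finite dyadic group. -/
def leadingDigits (M : ℕ) (x : ℝ) : DyadicGroup M := fun i => Real.digits x 2 i

lemma measurable_leadingDigits (M : ℕ) : Measurable (leadingDigits M) :=
  measurable_pi_lambda _ fun _ =>
    measurable_from_top.comp (Nat.measurable_floor.comp (measurable_id.mul_const _))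

lemma leadingDigits_dyadicAdd (M : ℕ) {x t : ℝ}
    (hxt : ∃ᶠ j in atTop, Real.digits t 2 j = Real.digits x 2 j) :
    leadingDigits M (dyadicAdd x t) = leadingDigits M x + leadingDigits M t := by
  have hdigits : Real.digits (dyadicAdd x t) 2 = Real.digits x 2 + Real.digits t 2 := by
    rw [dyadicAdd_eq_ofDigits]
    refine digits_ofDigits (hxt.mono fun j hj => ?_)
    rw [Pi.add_apply, hj]
    generalize Real.digits x 2 j = a
    fin_cases a <;> simp
  ext i
  simp only [leadingDigits, hdigits, Pi.add_apply]

lemma dyadicAdd_nonneg (x t : ℝ) : 0 ≤ dyadicAdd x t := by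
  rw [dyadicAdd_eq_ofDigits]
  exact Real.ofDigits_nonneg _

lemma finite_setOf_forall_digits_ne (x : ℝ) (k : ℕ) :
    {t ∈ Set.Ico (0 : ℝ) 1 | ∀ j ≥ k, Real.digits t 2 j ≠ Real.digits x 2 j}.Finite := by
  refine Set.Finite.of_injOn (Set.mapsTo_univ (leadingDigits k) _) ?_ Set.finite_univ
  rintro t ⟨ht, htx⟩ s ⟨hs, hsx⟩ hts
  rw [← Real.ofDigits_digits one_lt_two ht, ← Real.ofDigits_digits one_lt_two hs]
  congr 1
  ext i
  rcases lt_or_ge i k with hi | hi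
  · exact congrArg Fin.val (congrFun hts ⟨i, hi⟩)
  · have := htx i hi
    have := hsx i hi
    lia

lemma ae_frequently_digits_eq (x : ℝ) :
    ∀ᵐ t ∂unitMeasure, ∃ᶠ j in atTop, Real.digits t 2 j = Real.digits x 2 j := by
  simp only [frequently_atTop, unitMeasure]
  refine ae_all_iff.2 fun k => (ae_restrict_iff' measurableSet_Ico).2 ?_
  refine measure_mono_null (fun t ht => ?_)
    ((finite_setOf_forall_digits_ne x k).measure_zero volume)
  simpa [and_assoc] using ht

lemma fKernel_eq_paleyNorlund {M n : ℕ} (hn : n ≤ 2 ^ M) {x : ℝ} (hx : 0 ≤ x) :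
    FKernel n x = ((1 / logSum n) • paleyNorlund (coordSign M) n) (leadingDigits M x) := by
  have hcoord (k : ℕ) (hk : k < M) : rademacher k x = coordSign M k (leadingDigits M x) := by
    rw [rademacher_eq_neg_one_pow_digits k hx, coordSign, dif_pos hk, leadingDigits]
  have hdirichlet (m : ℕ) :
      dirichletKernel m x = paleyDirichlet (fun k => rademacher k x) m := rfl
  have hnorlund : paleyNorlund (coordSign M) n (leadingDigits M x) =
      paleyNorlund (fun k => coordSign M k (leadingDigits M x)) n :=
    map_paleyNorlund (Pi.evalAlgHom ℝ (fun _ => ℝ) (leadingDigits M x)) (coordSign M) n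
  rw [Pi.smul_apply, smul_eq_mul, hnorlund, ← paleyNorlund_congr hn hcoord, FKernel, paleyNorlund]
  congr 1
  exact Finset.sum_congr rfl fun i _ => by rw [hdirichlet, smul_eq_mul, one_div_mul_eq_div]

end BinaryExpansion

section FiberIntegral

variable {α ι : Type*} [MeasurableSpace α] {μ : Measure α} [Fintype ι] [MeasurableSpace ι]
  [MeasurableSingletonClass ι] {q : α → ι} {f : α → ℝ}

lemma integral_eq_sum_setIntegral_fiber (hq : Measurable q)
    (hf : ∀ b, IntegrableOn f (q ⁻¹' {b}) μ) :
    ∫ t, f t ∂μ = ∑ b, ∫ t in q ⁻¹' {b}, f t ∂μ := by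
  rw [← integral_iUnion_fintype (fun b => hq (measurableSet_singleton b)) _ hf,
    ← Set.preimage_iUnion, Set.iUnion_of_singleton, Set.preimage_univ, Measure.restrict_univ]
  exact fun b c hbc => (Set.disjoint_singleton.2 hbc).preimage q

lemma sum_abs_setIntegral_fiber_le (hq : Measurable q) (hf : Integrable f μ) :
    ∑ b, |∫ t in q ⁻¹' {b}, f t ∂μ| ≤ ∫ t, |f t| ∂μ := by
  rw [integral_eq_sum_setIntegral_fiber hq fun _ => hf.abs.integrableOn]
  exact Finset.sum_le_sum fun b _ => abs_integral_le_integral_abs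

lemma integral_mul_comp_eq_sum (hq : Measurable q) (hf : Integrable f μ) (k : ι → ℝ) :
    ∫ t, f t * k (q t) ∂μ = ∑ b, (∫ t in q ⁻¹' {b}, f t ∂μ) * k b := by
  have hfiber (b : ι) : Set.EqOn (fun t => f t * k b) (fun t => f t * k (q t)) (q ⁻¹' {b}) :=
    fun t ht => by simp only [show q t = b from ht]
  have hmeas (b : ι) : MeasurableSet (q ⁻¹' {b}) := hq (measurableSet_singleton b)
  have hint (b : ι) : IntegrableOn (fun t => f t * k b) (q ⁻¹' {b}) μ :=
    hf.integrableOn.mul_const (k b)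
  rw [integral_eq_sum_setIntegral_fiber hq fun b => (hint b).congr_fun (hfiber b) (hmeas b)]
  exact Finset.sum_congr rfl fun b _ => by
    rw [← setIntegral_congr_fun (hmeas b) (hfiber b), integral_mul_const]

end FiberIntegral

section Transfer

/-- The integrals of `f` over the dyadic intervals of length `2⁻ᴹ` in `[0,1)`, indexed by their
leading digits. -/
def cellIntegral (M : ℕ) (f : ℝ → ℝ) (b : DyadicGroup M) : ℝ :=
  ∫ t in leadingDigits M ⁻¹' {b}, f t ∂unitMeasure

variable {M : ℕ} {f K : ℝ → ℝ} {k : DyadicGroup M → ℝ}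

lemma dyadicConv_eq_correlation (hK : ∀ u, 0 ≤ u → K u = k (leadingDigits M u))
    (hf : Integrable f unitMeasure) (x : ℝ) :
    dyadicConv f K x = correlation (cellIntegral M f) k (leadingDigits M x) := by
  calc dyadicConv f K x
      = ∫ t, f t * k (leadingDigits M x + leadingDigits M t) ∂unitMeasure := by
        refine integral_congr_ae ((ae_frequently_digits_eq x).mono fun t ht => ?_)
        simp only [hK _ (dyadicAdd_nonneg x t), leadingDigits_dyadicAdd M ht]
    _ = correlation (cellIntegral M f) k (leadingDigits M x) := by
        rw [integral_mul_comp_eq_sum (measurable_leadingDigits M) hf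
          fun b => k (leadingDigits M x + b), correlation_apply]
        rfl

lemma unitMeasure_real_leadingDigits_preimage_singleton_le (b : DyadicGroup M) :
    unitMeasure.real (leadingDigits M ⁻¹' {b}) ≤ (2⁻¹ : ℝ) ^ M := by
  have hsub : leadingDigits M ⁻¹' {b} ∩ Set.Ico 0 1 ⊆
      Set.Icc (∑ i : Fin M, (b i : ℝ) * ((2 : ℝ) ^ ((i : ℕ) + 1))⁻¹)
        (∑ i : Fin M, (b i : ℝ) * ((2 : ℝ) ^ ((i : ℕ) + 1))⁻¹ + 2⁻¹ ^ M) := by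
    rintro x ⟨rfl, hx⟩
    have hle := Real.sum_ofDigitsTerm_digits_le (b := 2) hx M
    have hge := Real.le_sum_ofDigitsTerm_digits (b := 2) hx M
    rw [← Fin.sum_univ_eq_sum_range] at hle hge
    exact ⟨hle, sub_le_iff_le_add.1 hge⟩
  rw [unitMeasure, measureReal_restrict_apply' measurableSet_Ico]
  refine (measureReal_mono hsub measure_Icc_lt_top.ne).trans_eq ?_
  rw [Real.volume_real_Icc_of_le (by simp), add_sub_cancel_left]

lemma unitMeasure_real_leadingDigits_preimage_le (A : Finset (DyadicGroup M)) :
    unitMeasure.real (leadingDigits M ⁻¹' A) ≤ A.card / 2 ^ M := by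
  rw [← Set.biUnion_preimage_singleton]
  calc unitMeasure.real (⋃ b ∈ A, leadingDigits M ⁻¹' {b})
      ≤ ∑ b ∈ A, unitMeasure.real (leadingDigits M ⁻¹' {b}) := measureReal_biUnion_finset_le _ _
    _ ≤ A.card • (2⁻¹ : ℝ) ^ M := Finset.sum_le_card_nsmul _ _ _ fun b _ =>
        unitMeasure_real_leadingDigits_preimage_singleton_le b
    _ = A.card / 2 ^ M := by rw [nsmul_eq_mul, inv_pow, div_eq_mul_inv]

end Transfer

/-- the Nörlund logarithmic means `f ↦ f ∗ F_n` are uniformly of weak type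
`(1,1)` on `[0,1)`. -/
theorem stmt18 : ∃ C > (0:ℝ), ∀ n : ℕ, 2 ≤ n → ∀ f : ℝ → ℝ, Measurable f →
    Integrable f unitMeasure → ∀ lam > (0:ℝ),
    lam * (unitMeasure {x | lam < |dyadicConv f (FKernel n) x|}).toReal ≤
      C * ∫ x, |f x| ∂unitMeasure := by
  refine ⟨8, by norm_num, fun n hn f _ hf lam hlam => ?_⟩
  have hnn : n < 2 ^ n := Nat.lt_two_pow_self
  set k := (1 / logSum n) • paleyNorlund (coordSign n) n
  set A : Finset (DyadicGroup n) := {g | lam < |correlation (cellIntegral n f) k g|} with hA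
  have hset : {x | lam < |dyadicConv f (FKernel n) x|} = leadingDigits n ⁻¹' A := by
    ext x
    rw [Set.mem_ofPred_eq, dyadicConv_eq_correlation (k := k)
      (fun u hu => fKernel_eq_paleyNorlund hnn.le hu) hf]
    simp only [hA, Set.mem_preimage, SetLike.mem_coe, Finset.mem_filter_univ]
  calc lam * (unitMeasure {x | lam < |dyadicConv f (FKernel n) x|}).toReal
      ≤ lam * (A.card / 2 ^ n) := by
        rw [hset]
        exact mul_le_mul_of_nonneg_left (unitMeasure_real_leadingDigits_preimage_le A) hlam.le
    _ ≤ 8 * ∑ b, |cellIntegral n f b| := by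
        rw [← mul_div_assoc, div_le_iff₀ (by positivity)]
        linarith [mul_card_lt_abs_correlation_paleyNorlund_le hn hnn (cellIntegral n f) hlam]
    _ ≤ 8 * ∫ x, |f x| ∂unitMeasure := by
        gcongr
        exact sum_abs_setIntegral_fiber_le (measurable_leadingDigits n) hf

end
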